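/- arXiv:0807.3250 — 2 statements merged into one kernel-verified Lean document; each statement's English description precedes it below -/
import Mathlib

section
/- In H_{k⁺ⁱ}, for every α ≥ 0 the dual generators of H_{₊ᵢk} slide across the inclusion as follows: (a) ψ(x̄(₊ᵢk)_{j,α}) = φ(x̄(k)_{j,α}) for every j ≠ i, i+1; (b) ψ(x̄(₊ᵢk)_{i,α}) = Σ_{f=0}^{α} (−1)^f ξ^f · φ(x̄(k)_{i,α−f}); (c) ψ(x̄(₊ᵢk)_{i+1,α}) = ξ·φ(x̄(k)_{i+1,α−1}) + φ(x̄(k)_{i+1,α}). -/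
/-!
Cohomology rings of `n`-step partial flag varieties, following
Khovanov–Lauda, "A diagrammatic approach to categorification of quantum groups III",
Section 5 (Iterated flag varieties).
-/

open MvPolynomial Finset TensorProduct

noncomputable section

variable (𝕜 : Type) [Field 𝕜]

/-- The generator `x(k)_{j,α}` of `H_k` (with the conventions `x(k)_{j,0} = 1` and
`x(k)_{j,α} = 0` for `j` or `α` out of range), at the level of the ambient polynomial ring. -/
def xp (n : ℕ) (k : ℕ → ℕ) (j α : ℕ) : MvPolynomial (ℕ × ℕ) 𝕜 :=
  if α = 0 then 1 else if 1 ≤ j ∧ j ≤ n ∧ α ≤ k j - k (j - 1) then X (j, α) else 0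

/-- The degree `2d` part of the defining relation of `H_k`: the sum over all tuples
`(α_1, …, α_n)` with `α_1 + ⋯ + α_n = d` of the products `x(k)_{1,α_1} ⋯ x(k)_{n,α_n}`
(out-of-range tuples contribute `0`). -/
def relPoly (n : ℕ) (k : ℕ → ℕ) (d : ℕ) : MvPolynomial (ℕ × ℕ) 𝕜 :=
  ∑ t ∈ Finset.Nat.antidiagonalTuple n d, ∏ j : Fin n, xp 𝕜 n k ((j : ℕ) + 1) (t j)

/-- The pairs `(j, α)` indexing the actual generators of `H_k`. -/
def InRangeK (n : ℕ) (k : ℕ → ℕ) (j α : ℕ) : Prop :=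
  1 ≤ j ∧ j ≤ n ∧ 1 ≤ α ∧ α ≤ k j - k (j - 1)

/-- The defining ideal of `H_k`: the relations `relPoly` for every `d ≥ 1`, together with
all the irrelevant variables of the ambient polynomial ring. -/
def relIdealK (n : ℕ) (k : ℕ → ℕ) : Ideal (MvPolynomial (ℕ × ℕ) 𝕜) :=
  Ideal.span ({p | ∃ d, 1 ≤ d ∧ p = relPoly 𝕜 n k d} ∪
    {p | ∃ j α : ℕ, ¬ InRangeK n k j α ∧ p = X (j, α)})

/-- The cohomology ring `H_k` of the `n`-step flag variety `Fl(k)`. -/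
abbrev HK (n : ℕ) (k : ℕ → ℕ) : Type := MvPolynomial (ℕ × ℕ) 𝕜 ⧸ relIdealK 𝕜 n k

/-- The generator `x(k)_{j,α} ∈ H_k` (with conventions). -/
def xK (n : ℕ) (k : ℕ → ℕ) (j α : ℕ) : HK 𝕜 n k :=
  Ideal.Quotient.mk (relIdealK 𝕜 n k) (xp 𝕜 n k j α)

open Classical in
/-- The dual generator `x̄(k)_{j,α}`: the sum over all tuples `(α_ℓ)_{ℓ ≠ j}` with
`∑_{ℓ ≠ j} α_ℓ = α` of the products `∏_{ℓ ≠ j} x(k)_{ℓ,α_ℓ}`, at the polynomial level. -/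
def xbarp (n : ℕ) (k : ℕ → ℕ) (j α : ℕ) : MvPolynomial (ℕ × ℕ) 𝕜 :=
  ∑ t ∈ Finset.Nat.antidiagonalTuple n α,
    if ∀ ℓ : Fin n, (ℓ : ℕ) + 1 = j → t ℓ = 0 then
      ∏ ℓ : Fin n, xp 𝕜 n k ((ℓ : ℕ) + 1) (t ℓ)
    else 0

/-- The dual generator `x̄(k)_{j,α} ∈ H_k`. -/
def xbarK (n : ℕ) (k : ℕ → ℕ) (j α : ℕ) : HK 𝕜 n k :=
  Ideal.Quotient.mk (relIdealK 𝕜 n k) (xbarp 𝕜 n k j α)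

/-- The dual generator with an integer index, with `x̄(k)_{j,α} = 0` for `α < 0`. -/
def xbarKZ (n : ℕ) (k : ℕ → ℕ) (j : ℕ) (α : ℤ) : HK 𝕜 n k :=
  if 0 ≤ α then xbarK 𝕜 n k j α.toNat else 0

/-- The sequence `₊ᵢk`, obtained from `k` by replacing `k i` with `k i + 1`. -/
def kup (k : ℕ → ℕ) (i : ℕ) : ℕ → ℕ := fun j => if j = i then k i + 1 else k j

/-- The pairs `(j, α)` indexing the actual generators of `H_{k⁺ⁱ}`:
`ξ` is the variable `(0, 1)`, the `x_{j,α}` (`j ≠ i+1`) are the variables `(j, α)`, and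
the `x'_{i+1,α}` are the variables `(i+1, α)`. -/
def InRangeKi (n : ℕ) (k : ℕ → ℕ) (i j α : ℕ) : Prop :=
  (j = 0 ∧ α = 1) ∨
  (1 ≤ j ∧ j ≤ n ∧ j ≠ i + 1 ∧ 1 ≤ α ∧ α ≤ k j - k (j - 1)) ∨
  (j = i + 1 ∧ 1 ≤ α ∧ α ≤ k (i + 1) - k i - 1)

/-- The generator `x_{j,α}` (for `j ≠ i + 1`) of `H_{k⁺ⁱ}`, with conventions,
at the polynomial level. -/
def yp (n : ℕ) (k : ℕ → ℕ) (i j α : ℕ) : MvPolynomial (ℕ × ℕ) 𝕜 :=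
  if α = 0 then 1
  else if 1 ≤ j ∧ j ≤ n ∧ j ≠ i + 1 ∧ α ≤ k j - k (j - 1) then X (j, α) else 0

/-- The generator `x'_{i+1,α}` of `H_{k⁺ⁱ}`, with conventions, at the polynomial level. -/
def y'p (n : ℕ) (k : ℕ → ℕ) (i α : ℕ) : MvPolynomial (ℕ × ℕ) 𝕜 :=
  if α = 0 then 1 else if α ≤ k (i + 1) - k i - 1 then X (i + 1, α) else 0

/-- The coefficient of `t^α` in the `j`-th factor of the generating series
`(1 + ξt) ⬝ (∑_α x'_{i+1,α} t^α) ⬝ ∏_{j ≠ i+1} (∑_α x_{j,α} t^α)` defining `H_{k⁺ⁱ}`;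
the factor `j = 0` is `1 + ξ t`. -/
def fp (n : ℕ) (k : ℕ → ℕ) (i j α : ℕ) : MvPolynomial (ℕ × ℕ) 𝕜 :=
  if j = 0 then (if α = 0 then 1 else if α = 1 then X (0, 1) else 0)
  else if j = i + 1 then y'p 𝕜 n k i α
  else yp 𝕜 n k i j α

/-- The coefficient of `t^d` in
`(1 + ξt) ⬝ (∑_α x'_{i+1,α} t^α) ⬝ ∏_{j ≠ i+1} (∑_α x_{j,α} t^α)`. -/
def relPolyKi (n : ℕ) (k : ℕ → ℕ) (i d : ℕ) : MvPolynomial (ℕ × ℕ) 𝕜 :=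
  ∑ t ∈ Finset.Nat.antidiagonalTuple (n + 1) d, ∏ j : Fin (n + 1), fp 𝕜 n k i (j : ℕ) (t j)

/-- The defining ideal of `H_{k⁺ⁱ}`. -/
def relIdealKi (n : ℕ) (k : ℕ → ℕ) (i : ℕ) : Ideal (MvPolynomial (ℕ × ℕ) 𝕜) :=
  Ideal.span ({p | ∃ d, 1 ≤ d ∧ p = relPolyKi 𝕜 n k i d} ∪
    {p | ∃ j α : ℕ, ¬ InRangeKi n k i j α ∧ p = X (j, α)})

/-- The cohomology ring `H_{k⁺ⁱ}` of the `(n+1)`-step flag variety `Fl(k⁺ⁱ)`. -/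
abbrev HKi (n : ℕ) (k : ℕ → ℕ) (i : ℕ) : Type := MvPolynomial (ℕ × ℕ) 𝕜 ⧸ relIdealKi 𝕜 n k i

/-- The degree `2` generator `ξ ∈ H_{k⁺ⁱ}`. -/
def xiK (n : ℕ) (k : ℕ → ℕ) (i : ℕ) : HKi 𝕜 n k i :=
  Ideal.Quotient.mk (relIdealKi 𝕜 n k i) (X (0, 1))

/-- The generator `x_{j,α} ∈ H_{k⁺ⁱ}` (for `j ≠ i + 1`), with conventions. -/
def yK (n : ℕ) (k : ℕ → ℕ) (i j α : ℕ) : HKi 𝕜 n k i :=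
  Ideal.Quotient.mk (relIdealKi 𝕜 n k i) (yp 𝕜 n k i j α)

/-- The generator `x'_{i+1,α} ∈ H_{k⁺ⁱ}`, with conventions. -/
def y'K (n : ℕ) (k : ℕ → ℕ) (i α : ℕ) : HKi 𝕜 n k i :=
  Ideal.Quotient.mk (relIdealKi 𝕜 n k i) (y'p 𝕜 n k i α)

/-- `φ : H_k → H_{k⁺ⁱ}` is the algebra homomorphism determined by
`φ(x(k)_{j,α}) = x_{j,α}` for `j ≠ i+1` and
`φ(x(k)_{i+1,α}) = ξ·x'_{i+1,α-1} + x'_{i+1,α}`. -/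
def IsPhi (n : ℕ) (k : ℕ → ℕ) (i : ℕ) (φ : HK 𝕜 n k →ₐ[𝕜] HKi 𝕜 n k i) : Prop :=
  (∀ j α : ℕ, j ≠ i + 1 → φ (xK 𝕜 n k j α) = yK 𝕜 n k i j α) ∧
  (∀ α : ℕ, 1 ≤ α → φ (xK 𝕜 n k (i + 1) α) =
    xiK 𝕜 n k i * y'K 𝕜 n k i (α - 1) + y'K 𝕜 n k i α)

/-- `ψ : H_{₊ᵢk} → H_{k⁺ⁱ}` is the algebra homomorphism determined by
`ψ(x(₊ᵢk)_{j,α}) = x_{j,α}` for `j ≠ i, i+1`, `ψ(x(₊ᵢk)_{i+1,α}) = x'_{i+1,α}`, and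
`ψ(x(₊ᵢk)_{i,α}) = ξ·x_{i,α-1} + x_{i,α}`. -/
def IsPsi (n : ℕ) (k : ℕ → ℕ) (i : ℕ) (ψ : HK 𝕜 n (kup k i) →ₐ[𝕜] HKi 𝕜 n k i) : Prop :=
  (∀ j α : ℕ, j ≠ i → j ≠ i + 1 → ψ (xK 𝕜 n (kup k i) j α) = yK 𝕜 n k i j α) ∧
  (∀ α : ℕ, ψ (xK 𝕜 n (kup k i) (i + 1) α) = y'K 𝕜 n k i α) ∧
  (∀ α : ℕ, 1 ≤ α → ψ (xK 𝕜 n (kup k i) i α) =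
    xiK 𝕜 n k i * yK 𝕜 n k i i (α - 1) + yK 𝕜 n k i i α)

/-- The degree `2d` homogeneous component of a quotient of the polynomial ring, where the
variable `(j, α)` has degree `2α`. -/
def qgrade (I : Ideal (MvPolynomial (ℕ × ℕ) 𝕜)) (d : ℕ) :
    Submodule 𝕜 (MvPolynomial (ℕ × ℕ) 𝕜 ⧸ I) :=
  Submodule.map (Ideal.Quotient.mkₐ 𝕜 I).toLinearMap
    (weightedHomogeneousSubmodule 𝕜 (fun v : ℕ × ℕ => 2 * v.2) d)

end

theorem aux_coeff_prod {R : Type*} [CommRing R] (n : ℕ) : ∀ (g : Fin n → ℕ → R) (d : ℕ),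
    ∑ t ∈ Finset.Nat.antidiagonalTuple n d, ∏ j : Fin n, g j (t j) =
      PowerSeries.coeff d (∏ j : Fin n, PowerSeries.mk (g j)) := by
  intro g d
  rw [PowerSeries.coeff_prod, ← Finset.piAntidiag_univ_fin_eq_antidiagonalTuple]
  refine Finset.sum_bij' (fun t _ => Finsupp.equivFunOnFinite.symm t) (fun l _ => l) ?_ ?_ ?_ ?_ ?_
  · intro t ht
    simpa [Finset.mem_finsuppAntidiag, Finset.mem_piAntidiag] using ht
  · intro t ht
    simpa [Finset.mem_finsuppAntidiag, Finset.mem_piAntidiag] using ht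
  · intro t _; rfl
  · intro t _; ext; rfl
  · intro t _; simp

theorem aux_xbar (𝕜 : Type) [Field 𝕜] {R : Type*} [CommRing R] [Algebra 𝕜 R] (n : ℕ) (k : ℕ → ℕ)
    (F : HK 𝕜 n k →ₐ[𝕜] R) (j α : ℕ) :
    F (xbarK 𝕜 n k j α) = PowerSeries.coeff α (∏ l : Fin n, if (l : ℕ) + 1 = j then 1 else
      PowerSeries.mk (fun a => F (xK 𝕜 n k ((l : ℕ) + 1) a))) := by
  have h : ∀ l : Fin n, (if (l : ℕ) + 1 = j then (1 : PowerSeries R) else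
      PowerSeries.mk (fun a => F (xK 𝕜 n k ((l : ℕ) + 1) a))) =
      PowerSeries.mk (fun a => if (l : ℕ) + 1 = j then (if a = 0 then 1 else 0) else
        F (xK 𝕜 n k ((l : ℕ) + 1) a)) := by
    intro l
    ext a
    split_ifs <;> simp_all [PowerSeries.coeff_one]
  simp_rw [h]
  rw [← aux_coeff_prod]
  unfold xbarK xbarp
  rw [map_sum, map_sum]
  refine Finset.sum_congr rfl fun t _ => ?_
  split_ifs with hc
  · rw [map_prod, map_prod]
    refine Finset.prod_congr rfl fun l _ => ?_
    split_ifs with h1 h2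
    · simp [xp, h2]
    · exact absurd (hc l h1) h2
    · rfl
  · push Not at hc
    obtain ⟨l, hl, hl'⟩ := hc
    rw [map_zero, map_zero, eq_comm]
    apply Finset.prod_eq_zero (Finset.mem_univ l)
    simp [hl, hl']

theorem aux_prod {R : Type*} [CommRing R] (n i j : ℕ) (hi1 : 1 ≤ i) (hin : i ≤ n) (L : R)
    (B P : Fin n → R) (hP : ∀ l : Fin n, P l = (if (l : ℕ) + 1 = i then L else 1) * B l) :
    (∏ l : Fin n, if (l : ℕ) + 1 = j then 1 else P l) =
      (if i = j then 1 else L) * ∏ l : Fin n, if (l : ℕ) + 1 = j then 1 else B l := by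
  have h : ∀ l : Fin n, (if (l : ℕ) + 1 = j then 1 else P l) =
      (if l = ⟨i - 1, by omega⟩ then (if i = j then 1 else L) else 1) *
        (if (l : ℕ) + 1 = j then 1 else B l) := by
    intro l
    have e : l = ⟨i - 1, by omega⟩ ↔ (l : ℕ) + 1 = i := by
      rw [Fin.ext_iff]; simp only; omega
    simp only [hP, e]
    split_ifs <;> first | omega | simp
  simp_rw [h]
  rw [Finset.prod_mul_distrib, Finset.prod_ite_eq' Finset.univ]
  simp

theorem aux_inv {R : Type*} [CommRing R] (x : R) (d e : ℕ → R) (h0 : e 0 = d 0)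
    (h : ∀ a, e (a + 1) = d (a + 1) + x * d a) (α : ℕ) :
    d α = ∑ f ∈ Finset.range (α + 1), (-1 : R) ^ f * x ^ f * e (α - f) := by
  induction α with
  | zero => simp [h0]
  | succ a ih =>
    rw [Finset.sum_range_succ']
    have : ∀ f ∈ Finset.range (a + 1), (-1 : R) ^ (f + 1) * x ^ (f + 1) * e (a + 1 - (f + 1)) =
        (-x) * ((-1 : R) ^ f * x ^ f * e (a - f)) := by
      intro f _
      rw [Nat.add_sub_add_right]; ring
    rw [Finset.sum_congr rfl this, ← Finset.mul_sum, ← ih]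
    simp only [pow_zero, Nat.sub_zero, h]
    ring

theorem aux_L0 {R : Type*} [CommRing R] (x : R) (D : PowerSeries R) :
    PowerSeries.coeff 0 ((1 + PowerSeries.C x * PowerSeries.X) * D) = PowerSeries.coeff 0 D := by
  simp

theorem aux_L1 {R : Type*} [CommRing R] (x : R) (D : PowerSeries R) (a : ℕ) :
    PowerSeries.coeff (a + 1) ((1 + PowerSeries.C x * PowerSeries.X) * D) =
      PowerSeries.coeff (a + 1) D + x * PowerSeries.coeff a D := by
  rw [add_mul, one_mul, map_add, mul_assoc, PowerSeries.coeff_C_mul, PowerSeries.coeff_succ_X_mul]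

section Statements

variable (𝕜 : Type) [Field 𝕜]

theorem stmt6 (n N i : ℕ) (k : ℕ → ℕ)
    (hn : 1 ≤ n) (hk0 : k 0 = 0) (hkN : k n = N) (hmono : ∀ j, j < n → k j ≤ k (j + 1))
    (hi1 : 1 ≤ i) (hin : i + 1 ≤ n) (hik : k i < k (i + 1))
    (φ : HK 𝕜 n k →ₐ[𝕜] HKi 𝕜 n k i) (hφ : IsPhi 𝕜 n k i φ)
    (ψ : HK 𝕜 n (kup k i) →ₐ[𝕜] HKi 𝕜 n k i) (hψ : IsPsi 𝕜 n k i ψ) :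
    (∀ j α : ℕ, 1 ≤ j → j ≤ n → j ≠ i → j ≠ i + 1 →
      ψ (xbarK 𝕜 n (kup k i) j α) = φ (xbarK 𝕜 n k j α)) ∧
    (∀ α : ℕ, ψ (xbarK 𝕜 n (kup k i) i α) =
      ∑ f ∈ Finset.range (α + 1),
        (-1 : HKi 𝕜 n k i) ^ f * xiK 𝕜 n k i ^ f * φ (xbarK 𝕜 n k i (α - f))) ∧
    (∀ α : ℕ, ψ (xbarK 𝕜 n (kup k i) (i + 1) α) =
      xiK 𝕜 n k i * φ (xbarKZ 𝕜 n k (i + 1) ((α : ℤ) - 1)) +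
        φ (xbarK 𝕜 n k (i + 1) α)) := by
  set L : PowerSeries (HKi 𝕜 n k i) := 1 + PowerSeries.C (xiK 𝕜 n k i) * PowerSeries.X with hL
  set B : Fin n → PowerSeries (HKi 𝕜 n k i) := fun l =>
    if (l : ℕ) + 1 = i + 1 then PowerSeries.mk (fun a => y'K 𝕜 n k i a)
    else PowerSeries.mk (fun a => yK 𝕜 n k i ((l : ℕ) + 1) a) with hB
  have key1 : ∀ j α, φ (xbarK 𝕜 n k j α) = PowerSeries.coeff α
      ((if i + 1 = j then 1 else L) * ∏ l : Fin n, if (l : ℕ) + 1 = j then 1 else B l) := by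
    intro j α
    rw [aux_xbar, aux_prod n (i + 1) j (by omega) hin L B]
    intro l
    by_cases h : (l : ℕ) + 1 = i + 1
    · simp only [h, if_true, hB]
      ext a
      cases a with
      | zero => rw [hL, aux_L0]; simp [xK, xp, y'K, y'p]
      | succ a =>
        rw [hL, aux_L1]
        simp only [PowerSeries.coeff_mk]
        rw [hφ.2 _ (by omega), add_comm]; rfl
    · simp only [h, if_false, hB, one_mul]
      ext a
      simp only [PowerSeries.coeff_mk]
      rw [hφ.1 _ _ h]
  have key2 : ∀ j α, ψ (xbarK 𝕜 n (kup k i) j α) = PowerSeries.coeff α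
      ((if i = j then 1 else L) * ∏ l : Fin n, if (l : ℕ) + 1 = j then 1 else B l) := by
    intro j α
    rw [aux_xbar, aux_prod n i j (by omega) (by omega) L B]
    intro l
    by_cases h : (l : ℕ) + 1 = i
    · have h' : ¬ i = i + 1 := by omega
      simp only [h, if_true, hB, h', if_false]
      ext a
      cases a with
      | zero => rw [hL, aux_L0]; simp [xK, xp, yK, yp]
      | succ a =>
        rw [hL, aux_L1]
        simp only [PowerSeries.coeff_mk]
        rw [hψ.2.2 _ (by omega), add_comm]; rfl
    · by_cases h2 : (l : ℕ) + 1 = i + 1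
      · have h' : ¬ i + 1 = i := by omega
        simp only [h2, h', if_false, if_true, hB, one_mul]
        ext a
        simp only [PowerSeries.coeff_mk]
        rw [hψ.2.1]
      · simp only [h, h2, if_false, hB, one_mul]
        ext a
        simp only [PowerSeries.coeff_mk]
        rw [hψ.1 _ _ h h2]
  have ne1 : ¬ i + 1 = i := by omega
  have ne2 : ¬ i = i + 1 := by omega
  refine ⟨?_, ?_, ?_⟩
  · intro j α _ _ h1 h2
    rw [key1, key2, if_neg (Ne.symm h1), if_neg (Ne.symm h2)]
  · intro α
    refine aux_inv (xiK 𝕜 n k i) (fun a => ψ (xbarK 𝕜 n (kup k i) i a))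
      (fun a => φ (xbarK 𝕜 n k i a)) ?_ ?_ α
    · simp only [key1, key2, if_neg ne1, if_true, one_mul]
      rw [hL, aux_L0]
    · intro a
      simp only [key1, key2, if_neg ne1, if_true, one_mul]
      rw [hL, aux_L1]
  · intro α
    cases α with
    | zero =>
      simp only [key1, key2, if_neg ne2, if_true, one_mul]
      rw [hL, aux_L0]
      simp [xbarKZ]
    | succ a =>
      have : xbarKZ 𝕜 n k (i + 1) (((a + 1 : ℕ) : ℤ) - 1) = xbarK 𝕜 n k (i + 1) a := by
        simp [xbarKZ]
      rw [this]
      simp only [key1, key2, if_neg ne2, if_true, one_mul]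
      rw [hL, aux_L1, add_comm]

end Statements
end

section
/- Set m' = k_{i+1} − k_i − 1 and let c' := Σ_{g=0}^{m'} (−1)^{m'−g} ξ^g ⊗ ψ(x(₊ᵢk)_{i+1,m'−g}) ∈ H_{k⁺ⁱ} ⊗_{H_k} H_{k⁺ⁱ}. Then for every z ∈ H_{₊ᵢk} one has (ψ(z) ⊗ 1)·c' = (1 ⊗ ψ(z))·c'; consequently the 𝕜-linear map H_{₊ᵢk} → H_{k⁺ⁱ} ⊗_{H_k} H_{k⁺ⁱ} sending z to (ψ(z) ⊗ 1)·c' is a homomorphism of (H_{₊ᵢk}, H_{₊ᵢk})-bimodules (where H_{₊ᵢk} acts on the left through ψ on the left tensor factor and on the right through ψ on the right tensor factor). -/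
/-!
Cohomology rings of `n`-step partial flag varieties, following
Khovanov–Lauda, "A diagrammatic approach to categorification of quantum groups III",
Section 5 (Iterated flag varieties).
-/

open MvPolynomial Finset TensorProduct

theorem aux_sum {T : Type*} [CommRing T] (a b : T) (p q : ℕ → T) (hp : p 0 = 1) (hq : q 0 = 1)
    (h : ∀ α, a * p α + p (α + 1) = b * q α + q (α + 1)) (m : ℕ) :
    (a - b) * (∑ g ∈ Finset.range (m + 1), (-1 : T) ^ (m - g) * (a ^ g * q (m - g))) =
      (-1) ^ m * (q (m + 1) - p (m + 1)) := by
  induction m with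
  | zero =>
    have := h 0
    simp only [hp, hq] at this
    simp [hq]
    linear_combination this
  | succ m ih =>
    rw [Finset.sum_range_succ']
    have e : ∑ g ∈ Finset.range (m + 1),
        (-1 : T) ^ (m + 1 - (g + 1)) * (a ^ (g + 1) * q (m + 1 - (g + 1))) =
        a * ∑ g ∈ Finset.range (m + 1), (-1 : T) ^ (m - g) * (a ^ g * q (m - g)) := by
      rw [Finset.mul_sum]
      refine Finset.sum_congr rfl fun g _ => ?_
      rw [Nat.add_sub_add_right]
      ring
    rw [e]
    simp only [Nat.sub_zero, pow_zero, one_mul]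
    have := h (m + 1)
    rw [pow_succ]
    linear_combination a * ih - (-1) ^ m * this

theorem aux_mul {T : Type*} [CommRing T] (a b c : T) (p q : ℕ → T) (hp : p 0 = 1) (hq : q 0 = 1)
    (h : ∀ α, a * p α + p (α + 1) = b * q α + q (α + 1)) (hc : a * c = b * c) (α : ℕ) :
    p α * c = q α * c := by
  induction α with
  | zero => rw [hp, hq]
  | succ m ih => linear_combination c * h m - a * ih - q m * hc

section Main12

variable (𝕜 : Type) [Field 𝕜]

theorem aux_main {T : Type*} [CommRing T] (n i : ℕ) (k : ℕ → ℕ)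
    (φ : HK 𝕜 n k →ₐ[𝕜] HKi 𝕜 n k i) (hφ : IsPhi 𝕜 n k i φ)
    (ψ : HK 𝕜 n (kup k i) →ₐ[𝕜] HKi 𝕜 n k i) (hψ : IsPsi 𝕜 n k i ψ)
    (L R : HKi 𝕜 n k i →+* T) (hLR : ∀ x, L (φ x) = R (φ x)) (c : T)
    (hc : c = ∑ g ∈ Finset.range (k (i + 1) - k i - 1 + 1),
      (-1 : T) ^ (k (i + 1) - k i - 1 - g) * (L (xiK 𝕜 n k i) ^ g *
        R (ψ (xK 𝕜 n (kup k i) (i + 1) (k (i + 1) - k i - 1 - g)))))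
    (z : HK 𝕜 n (kup k i)) : L (ψ z) * c = R (ψ z) * c := by
  obtain ⟨hφ1, hφ2⟩ := hφ
  obtain ⟨hψ1, hψ2, hψ3⟩ := hψ
  simp only [hψ2] at hc
  have y0 : y'K 𝕜 n k i 0 = 1 := by simp [y'K, y'p]
  have ym : y'K 𝕜 n k i (k (i + 1) - k i - 1 + 1) = 0 := by simp [y'K, y'p]
  have hrel : ∀ α, L (xiK 𝕜 n k i) * L (y'K 𝕜 n k i α) + L (y'K 𝕜 n k i (α + 1)) =
      R (xiK 𝕜 n k i) * R (y'K 𝕜 n k i α) + R (y'K 𝕜 n k i (α + 1)) := by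
    intro α
    have := hLR (xK 𝕜 n k (i + 1) (α + 1))
    rw [hφ2 _ (by omega)] at this
    simpa using this
  have hy : ∀ j α, j ≠ i + 1 → L (yK 𝕜 n k i j α) = R (yK 𝕜 n k i j α) := by
    intro j α hj
    rw [← hφ1 j α hj]; exact hLR _
  have hab : L (xiK 𝕜 n k i) * c = R (xiK 𝕜 n k i) * c := by
    have := aux_sum (L (xiK 𝕜 n k i)) (R (xiK 𝕜 n k i)) (fun α => L (y'K 𝕜 n k i α))
      (fun α => R (y'K 𝕜 n k i α)) (by simp [y0]) (by simp [y0]) hrel (k (i + 1) - k i - 1)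
    simp only [ym, map_zero, sub_zero, mul_zero] at this
    rw [← hc] at this
    linear_combination this
  have hp := aux_mul (L (xiK 𝕜 n k i)) (R (xiK 𝕜 n k i)) c (fun α => L (y'K 𝕜 n k i α))
      (fun α => R (y'K 𝕜 n k i α)) (by simp [y0]) (by simp [y0]) hrel hab
  have hgen : ∀ j α, 1 ≤ α → L (ψ (xK 𝕜 n (kup k i) j α)) * c =
      R (ψ (xK 𝕜 n (kup k i) j α)) * c := by
    intro j α hα
    by_cases h1 : j = i
    · subst h1
      rw [hψ3 α hα]
      simp only [map_add, map_mul]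
      rw [hy _ _ (by omega), hy _ _ (by omega)]
      linear_combination R (yK 𝕜 n k j j (α - 1)) * hab
    · by_cases h2 : j = i + 1
      · subst h2
        rw [hψ2]; exact hp α
      · rw [hψ1 j α h1 h2, hy _ _ h2]
  obtain ⟨f, rfl⟩ := Ideal.Quotient.mk_surjective z
  induction f using MvPolynomial.induction_on with
  | C r =>
    have e : (Ideal.Quotient.mk (relIdealK 𝕜 n (kup k i)) (C r)) =
      algebraMap 𝕜 (HK 𝕜 n (kup k i)) r := rfl
    have e2 : ψ (algebraMap 𝕜 (HK 𝕜 n (kup k i)) r) = φ (algebraMap 𝕜 (HK 𝕜 n k) r) := by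
      rw [AlgHom.commutes, AlgHom.commutes]
    rw [e, e2, hLR]
  | add p q h1 h2 =>
    simp only [map_add, add_mul, h1, h2]
  | mul_X p v h =>
    have hX : L (ψ (Ideal.Quotient.mk (relIdealK 𝕜 n (kup k i)) (X v))) * c =
        R (ψ (Ideal.Quotient.mk (relIdealK 𝕜 n (kup k i)) (X v))) * c := by
      obtain ⟨j, α⟩ := v
      by_cases hr : InRangeK n (kup k i) j α
      · have := hgen j α hr.2.2.1
        have e : xp 𝕜 n (kup k i) j α = X (j, α) := by
          obtain ⟨h1, h2, h3, h4⟩ := hr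
          rw [xp, if_neg (by omega), if_pos ⟨h1, h2, h4⟩]
        rwa [xK, e] at this
      · have : Ideal.Quotient.mk (relIdealK 𝕜 n (kup k i)) (X (j, α)) = 0 :=
          Ideal.Quotient.eq_zero_iff_mem.2 (Ideal.subset_span (Or.inr ⟨j, α, hr, rfl⟩))
        rw [this, map_zero, map_zero, map_zero]
    simp only [map_mul]
    linear_combination
      L (ψ (Ideal.Quotient.mk (relIdealK 𝕜 n (kup k i)) p)) * hX +
      R (ψ (Ideal.Quotient.mk (relIdealK 𝕜 n (kup k i)) (X v))) * h

end Main12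

section Statements2

variable (𝕜 : Type) [Field 𝕜]

set_option synthInstance.maxHeartbeats 1000000 in
set_option maxHeartbeats 1000000 in
theorem stmt12 (n N i : ℕ) (k : ℕ → ℕ)
    (hn : 1 ≤ n) (hk0 : k 0 = 0) (hkN : k n = N) (hmono : ∀ j, j < n → k j ≤ k (j + 1))
    (hi1 : 1 ≤ i) (hin : i + 1 ≤ n) (hik : k i < k (i + 1))
    (φ : HK 𝕜 n k →ₐ[𝕜] HKi 𝕜 n k i) (hφ : IsPhi 𝕜 n k i φ)
    (ψ : HK 𝕜 n (kup k i) →ₐ[𝕜] HKi 𝕜 n k i) (hψ : IsPsi 𝕜 n k i ψ) :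
    letI : Algebra (HK 𝕜 n k) (HKi 𝕜 n k i) := φ.toRingHom.toAlgebra
    ∀ z : HK 𝕜 n (kup k i),
      (ψ z ⊗ₜ[HK 𝕜 n k] (1 : HKi 𝕜 n k i)) *
        (∑ g ∈ Finset.range (k (i + 1) - k i - 1 + 1),
          (-1 : TensorProduct (HK 𝕜 n k) (HKi 𝕜 n k i) (HKi 𝕜 n k i)) ^
              (k (i + 1) - k i - 1 - g) *
            ((xiK 𝕜 n k i ^ g) ⊗ₜ[HK 𝕜 n k]
              ψ (xK 𝕜 n (kup k i) (i + 1) (k (i + 1) - k i - 1 - g)))) =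
      ((1 : HKi 𝕜 n k i) ⊗ₜ[HK 𝕜 n k] ψ z) *
        (∑ g ∈ Finset.range (k (i + 1) - k i - 1 + 1),
          (-1 : TensorProduct (HK 𝕜 n k) (HKi 𝕜 n k i) (HKi 𝕜 n k i)) ^
              (k (i + 1) - k i - 1 - g) *
            ((xiK 𝕜 n k i ^ g) ⊗ₜ[HK 𝕜 n k]
              ψ (xK 𝕜 n (kup k i) (i + 1) (k (i + 1) - k i - 1 - g)))) := by
  intro z
  letI : Algebra (HK 𝕜 n k) (HKi 𝕜 n k i) := φ.toRingHom.toAlgebra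
  refine aux_main (T := TensorProduct (HK 𝕜 n k) (HKi 𝕜 n k i) (HKi 𝕜 n k i)) 𝕜 n i k φ hφ ψ hψ
    (Algebra.TensorProduct.includeLeftRingHom (R := HK 𝕜 n k) (A := HKi 𝕜 n k i)
      (B := HKi 𝕜 n k i))
    ((Algebra.TensorProduct.includeRight (R := HK 𝕜 n k) (A := HKi 𝕜 n k i)
      (B := HKi 𝕜 n k i)).toRingHom) ?_ _ ?_ z
  · intro x
    exact ((Algebra.TensorProduct.includeLeft (R := HK 𝕜 n k) (S := HK 𝕜 n k)
      (A := HKi 𝕜 n k i) (B := HKi 𝕜 n k i)).commutes x).trans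
      ((Algebra.TensorProduct.includeRight (R := HK 𝕜 n k) (A := HKi 𝕜 n k i)
      (B := HKi 𝕜 n k i)).commutes x).symm
  · refine Finset.sum_congr rfl fun g _ => ?_
    congr 1
    rw [← map_pow]
    refine Eq.trans ?_ (Algebra.TensorProduct.tmul_mul_tmul _ _ _ _).symm
    rw [mul_one, one_mul]

end Statements2
end
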